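/- arXiv:math/0405244 — 2 statements merged into one kernel-verified Lean document; each statement's English description precedes it below -/
import Mathlib

section
/- For every real number l > 0, the pointwise power δ^l of the delta functional (so δ^l(0) = H′^(l·H²) and δ^l(a) = 0 for a ≠ 0) satisfies (F(δ^l))(b) = H′^((l−1)·H²) for every b ∈ X; that is, F(δ^l) is the constant functional with value H′^((l−1)·H²). -/
open Complex Finset

noncomputable section

/-- Balanced representative of `z : ZMod n` in `[-n/2, n/2)`. -/
def bval (n : ℕ) (z : ZMod n) : ℤ :=
  if 2 * (z.val : ℤ) < (n : ℤ) then (z.val : ℤ) else (z.val : ℤ) - (n : ℤ)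

/-- The real point `ε′·z′ ∈ [-H'/2, H'/2)` of `L′` corresponding to `v : ZMod (H'^2)`;
the group structure of `ZMod (H'^2)` realizes pointwise addition followed by
reduction modulo `H'` back into `L′`. -/
def Lp' (H' : ℕ) (v : ZMod (H' ^ 2)) : ℝ := (bval (H' ^ 2) v : ℝ) / H'

/-- `X` is the finite abelian group of all functions from `L` (`H²` points) to `L′`. -/
abbrev X (H H' : ℕ) := ZMod (H ^ 2) → ZMod (H' ^ 2)

/-- `⟨a,b⟩ = Σ_{k∈L} a(k)·b(k)`. -/
def ip (H H' : ℕ) [NeZero H] (a b : X H H') : ℝ :=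
  ∑ k : ZMod (H ^ 2), Lp' H' (a k) * Lp' H' (b k)

/-- `ε₀ = H′^(−H²)`. -/
def eps0 (H H' : ℕ) : ℝ := ((H' : ℝ) ^ (H ^ 2))⁻¹

/-- `ε′ = 1/H′`. -/
def eps' (H' : ℕ) : ℝ := 1 / H'

/-- `(Ff)(b) = Σ_{a∈X} ε₀·exp(−2πi⟨a,b⟩)·f(a)`. -/
def Ftr (H H' : ℕ) [NeZero H] [NeZero H'] (f : X H H' → ℂ) (b : X H H') : ℂ :=
  ∑ a : X H H',
    (eps0 H H' : ℂ) * Complex.exp (-2 * (Real.pi : ℂ) * I * (ip H H' a b : ℂ)) * f a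

/-- `(F̄f)(b) = Σ_{a∈X} ε₀·exp(2πi⟨a,b⟩)·f(a)`. -/
def Ftrinv (H H' : ℕ) [NeZero H] [NeZero H'] (f : X H H' → ℂ) (b : X H H') : ℂ :=
  ∑ a : X H H',
    (eps0 H H' : ℂ) * Complex.exp (2 * (Real.pi : ℂ) * I * (ip H H' a b : ℂ)) * f a

/-- `(f∗g)(a) = Σ_{a′∈X} ε₀·f(a−a′)·g(a′)`. -/
def conv (H H' : ℕ) [NeZero H] [NeZero H'] (f g : X H H' → ℂ) (a : X H H') : ℂ :=
  ∑ a' : X H H', (eps0 H H' : ℂ) * f (a - a') * g a'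

/-- `(f,g) = Σ_{b∈X} ε₀·conj(f(b))·g(b)`. -/
def iprod (H H' : ℕ) [NeZero H] [NeZero H'] (f g : X H H' → ℂ) : ℂ :=
  ∑ b : X H H', (eps0 H H' : ℂ) * (starRingEnd ℂ) (f b) * g b

/-- `δ(0) = H′^(H²)` and `δ(a) = 0` for `a ≠ 0`. -/
def delta (H H' : ℕ) [NeZero H] [NeZero H'] (a : X H H') : ℂ :=
  if a = 0 then (((H' : ℝ) ^ (H ^ 2) : ℝ) : ℂ) else 0

/-- Forward divided difference `(D₊,b f)(a) = (f(a + ε′b) − f(a))/ε′`,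
where `eb` is the element `ε′b` of `X`. -/
def Dp (H H' : ℕ) (eb : X H H') (f : X H H' → ℂ) (a : X H H') : ℂ :=
  (f (a + eb) - f a) / (eps' H' : ℂ)

/-- Backward divided difference `(D₋,b f)(a) = (f(a) − f(a − ε′b))/ε′`. -/
def Dm (H H' : ℕ) (eb : X H H') (f : X H H' → ℂ) (a : X H H') : ℂ :=
  (f a - f (a - eb)) / (eps' H' : ℂ)

/-- `λ_b(a) = (exp(2πi ε′⟨a,b⟩) − 1)/ε′`. -/
def lam (H H' : ℕ) [NeZero H] (b a : X H H') : ℂ :=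
  (Complex.exp (2 * (Real.pi : ℂ) * I * (eps' H' : ℂ) * (ip H H' a b : ℂ)) - 1) /
    (eps' H' : ℂ)

/-- `λ̄_b(a) = (exp(−2πi ε′⟨a,b⟩) − 1)/ε′`. -/
def lamBar (H H' : ℕ) [NeZero H] (b a : X H H') : ℂ :=
  (Complex.exp (-2 * (Real.pi : ℂ) * I * (eps' H' : ℂ) * (ip H H' a b : ℂ)) - 1) /
    (eps' H' : ℂ)

@[simp]
theorem bval_zero (n : ℕ) : bval n 0 = 0 := by
  simp [bval]

@[simp]
theorem Lp'_zero (H' : ℕ) : Lp' H' 0 = 0 := by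
  simp [Lp']

theorem ip_zero_left (H H' : ℕ) [NeZero H] (b : X H H') : ip H H' 0 b = 0 := by
  simp [ip]

theorem Ftr_eq_eps0_mul_of_forall_ne_zero (H H' : ℕ) [NeZero H] [NeZero H'] {f : X H H' → ℂ}
    (hf : ∀ a, a ≠ 0 → f a = 0) (b : X H H') : Ftr H H' f b = (eps0 H H' : ℂ) * f 0 := by
  rw [Ftr, Fintype.sum_eq_single 0 fun a ha => by rw [hf a ha, mul_zero], ip_zero_left, ofReal_zero,
    mul_zero, Complex.exp_zero, mul_one]

theorem eps0_eq_rpow (H H' : ℕ) : eps0 H H' = (H' : ℝ) ^ (-(H : ℝ) ^ 2) := by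
  rw [eps0, Real.rpow_neg H'.cast_nonneg, ← Nat.cast_pow H, Real.rpow_natCast]

theorem eps0_mul_rpow (H H' : ℕ) [NeZero H'] (l : ℝ) :
    eps0 H H' * (H' : ℝ) ^ (l * (H : ℝ) ^ 2) = (H' : ℝ) ^ ((l - 1) * (H : ℝ) ^ 2) := by
  have hH' : (0 : ℝ) < H' := Nat.cast_pos.mpr (NeZero.pos H')
  have exponent_eq : -(H : ℝ) ^ 2 + l * (H : ℝ) ^ 2 = (l - 1) * (H : ℝ) ^ 2 := by ring
  rw [eps0_eq_rpow, ← Real.rpow_add hH', exponent_eq]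

theorem stmt7_general (H H' : ℕ) [NeZero H] [NeZero H'] (l : ℝ) (b : X H H') :
    Ftr H H' (fun a => if a = 0 then (((H' : ℝ) ^ (l * (H : ℝ) ^ 2) : ℝ) : ℂ) else 0) b =
      (((H' : ℝ) ^ ((l - 1) * (H : ℝ) ^ 2) : ℝ) : ℂ) := by
  rw [Ftr_eq_eps0_mul_of_forall_ne_zero H H' (fun _ ha => if_neg ha), if_pos rfl, ← ofReal_mul,
    eps0_mul_rpow]

/-- for `l > 0`, `F(δ^l)` is the constant `H′^((l−1)H²)`, where
`δ^l(0) = H′^(l·H²)` and `δ^l(a) = 0` for `a ≠ 0`. -/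
theorem stmt7 (H H' : ℕ) [NeZero H] [NeZero H'] (hH : Even H) (hH' : Even H')
    (l : ℝ) (hl : 0 < l) (b : X H H') :
    Ftr H H'
        (fun a => if a = 0 then ((Real.rpow (H' : ℝ) (l * (H : ℝ) ^ 2) : ℝ) : ℂ) else 0) b =
      ((Real.rpow (H' : ℝ) ((l - 1) * (H : ℝ) ^ 2) : ℝ) : ℂ) :=
  stmt7_general H H' l b
end
end

section
/- For every functional f : X → ℂ and every a ∈ X: (F(λ_b·f))(a) = −(D₋,b(Ff))(a) and (F(λ̄_b·f))(a) = (D₊,b(Ff))(a), where λ_b·f and λ̄_b·f denote pointwise products. -/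
open Complex Finset

noncomputable section

/- The product of the points `ε′m` and `ε′n` of `L′` is `mn / H'²`, so the kernel `exp(2πi⟨x,a⟩)` of
the transform is the standard additive character of `ℤ/H'²` at the dot product of `x` and `a`. It is
therefore a bicharacter of `X`, and `F` turns modulation by `exp(2πi⟨·,c⟩)` into translation by `c`.
For `c = ε′b`, `λ_b = (exp(2πi⟨·,c⟩) - 1)/ε′`, so multiplication by `λ_b` becomes a difference
quotient. -/

section FourierTransform

theorem intCast_bval (n : ℕ) [NeZero n] (z : ZMod n) : (bval n z : ZMod n) = z := by
  unfold bval
  split_ifs <;> simp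

variable {H H' : ℕ} [NeZero H]

theorem ip_eq_intCast_div (x a : X H H') :
    ip H H' x a = ((∑ k, bval (H' ^ 2) (x k) * bval (H' ^ 2) (a k) : ℤ) : ℝ) / (H' ^ 2 : ℕ) := by
  unfold ip Lp'
  push_cast
  rw [sum_div]
  exact sum_congr rfl fun k _ => by rw [div_mul_div_comm, ← sq (H' : ℝ)]

theorem ip_eq_eps'_mul_ip {b eb : X H H'} (heb : ∀ k, Lp' H' (eb k) = eps' H' * Lp' H' (b k))
    (x : X H H') : ip H H' x eb = eps' H' * ip H H' x b := by
  unfold ip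
  rw [mul_sum]
  exact sum_congr rfl fun k _ => by rw [heb, mul_left_comm]

variable [NeZero H']

theorem exp_two_pi_I_mul_ip (x a : X H H') :
    exp (2 * Real.pi * I * ip H H' x a) = ZMod.stdAddChar (x ⬝ᵥ a) := by
  have hdot : ((∑ k, bval (H' ^ 2) (x k) * bval (H' ^ 2) (a k) : ℤ) : ZMod (H' ^ 2)) = x ⬝ᵥ a := by
    push_cast
    simp only [intCast_bval, dotProduct]
  rw [← hdot, ZMod.stdAddChar_coe, ip_eq_intCast_div]
  push_cast
  rw [mul_div_assoc]

theorem exp_neg_two_pi_I_mul_ip (x a : X H H') :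
    exp (-2 * Real.pi * I * ip H H' x a) = ZMod.stdAddChar (-(x ⬝ᵥ a)) := by
  rw [AddChar.map_neg_eq_inv, ← exp_two_pi_I_mul_ip, ← Complex.exp_neg]
  ring_nf

theorem Ftr_eq_sum_stdAddChar (f : X H H' → ℂ) (a : X H H') :
    Ftr H H' f a = ∑ x, (eps0 H H' : ℂ) * ZMod.stdAddChar (-(x ⬝ᵥ a)) * f x := by
  simp only [Ftr, exp_neg_two_pi_I_mul_ip]

theorem Ftr_sub (f g : X H H' → ℂ) (a : X H H') :
    Ftr H H' (fun x => f x - g x) a = Ftr H H' f a - Ftr H H' g a := by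
  simp only [Ftr, mul_sub, sum_sub_distrib]

theorem Ftr_div_const (f : X H H' → ℂ) (c : ℂ) (a : X H H') :
    Ftr H H' (fun x => f x / c) a = Ftr H H' f a / c := by
  simp only [Ftr, mul_div_assoc, sum_div]

theorem Ftr_sub_one_div_mul (χ f : X H H' → ℂ) (c : ℂ) (a : X H H') :
    Ftr H H' (fun x => (χ x - 1) / c * f x) a =
      (Ftr H H' (fun x => χ x * f x) a - Ftr H H' f a) / c := by
  simp only [div_mul_eq_mul_div, sub_one_mul, Ftr_div_const, Ftr_sub]

theorem Ftr_stdAddChar_mul (c : X H H') (f : X H H' → ℂ) (a : X H H') :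
    Ftr H H' (fun x => ZMod.stdAddChar (x ⬝ᵥ c) * f x) a = Ftr H H' f (a - c) := by
  simp only [Ftr_eq_sum_stdAddChar]
  refine sum_congr rfl fun x _ => ?_
  rw [dotProduct_sub, neg_sub, sub_eq_neg_add, AddChar.map_add_eq_mul]
  ring

theorem Ftr_stdAddChar_neg_mul (c : X H H') (f : X H H' → ℂ) (a : X H H') :
    Ftr H H' (fun x => ZMod.stdAddChar (-(x ⬝ᵥ c)) * f x) a = Ftr H H' f (a + c) := by
  simpa only [dotProduct_neg, sub_neg_eq_add] using Ftr_stdAddChar_mul (-c) f a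

theorem lam_eq_stdAddChar_sub_one_div {b eb : X H H'}
    (heb : ∀ k, Lp' H' (eb k) = eps' H' * Lp' H' (b k)) (x : X H H') :
    lam H H' b x = (ZMod.stdAddChar (x ⬝ᵥ eb) - 1) / (eps' H' : ℂ) := by
  rw [lam, ← exp_two_pi_I_mul_ip, ip_eq_eps'_mul_ip heb, ofReal_mul, ← mul_assoc]

theorem lamBar_eq_stdAddChar_neg_sub_one_div {b eb : X H H'}
    (heb : ∀ k, Lp' H' (eb k) = eps' H' * Lp' H' (b k)) (x : X H H') :
    lamBar H H' b x = (ZMod.stdAddChar (-(x ⬝ᵥ eb)) - 1) / (eps' H' : ℂ) := by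
  rw [lamBar, ← exp_neg_two_pi_I_mul_ip, ip_eq_eps'_mul_ip heb, ofReal_mul, ← mul_assoc]

end FourierTransform

theorem stmt9_general (H H' : ℕ) [NeZero H] [NeZero H'] (b eb : X H H')
    (heb : ∀ k, Lp' H' (eb k) = eps' H' * Lp' H' (b k))
    (f : X H H' → ℂ) (a : X H H') :
    Ftr H H' (fun x => lam H H' b x * f x) a = -(Dm H H' eb (Ftr H H' f) a) ∧
    Ftr H H' (fun x => lamBar H H' b x * f x) a = Dp H H' eb (Ftr H H' f) a := by
  constructor
  · simp only [lam_eq_stdAddChar_sub_one_div heb, Ftr_sub_one_div_mul, Ftr_stdAddChar_mul]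
    rw [Dm, ← neg_div, neg_sub]
  · simp only [lamBar_eq_stdAddChar_neg_sub_one_div heb, Ftr_sub_one_div_mul,
      Ftr_stdAddChar_neg_mul]
    rw [Dp]

/-- `(F(λ_b·f))(a) = −(D₋,b(Ff))(a)` and `(F(λ̄_b·f))(a) = (D₊,b(Ff))(a)`,
where `b ∈ X` takes values in `ℤ ∩ L′` and `eb = ε′b ∈ X`. -/
theorem stmt9 (H H' : ℕ) [NeZero H] [NeZero H'] (hH : Even H) (hH' : Even H')
    (b eb : X H H')
    (hb : ∀ k, ∃ m : ℤ, Lp' H' (b k) = (m : ℝ))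
    (heb : ∀ k, Lp' H' (eb k) = eps' H' * Lp' H' (b k))
    (f : X H H' → ℂ) (a : X H H') :
    Ftr H H' (fun x => lam H H' b x * f x) a = -(Dm H H' eb (Ftr H H' f) a) ∧
    Ftr H H' (fun x => lamBar H H' b x * f x) a = Dp H H' eb (Ftr H H' f) a :=
  stmt9_general H H' b eb heb f a
end
end
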